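/- Let q = c/d be a positive rational in lowest terms and let w_n = |W_{q,n}|. Then for all n ≥ c + d, w_n = Σ_{j ∈ J} w_{n−j} + w_{n−(c+d)}, where J = {1 + ⌊i/q⌋ + i : 0 ≤ i ≤ c−1} is the multiset of total degrees of the model polynomial P_q. -/

import Mathlib

/-- `isValid c d w` says every maximal factor of `w` of the form `0^a 1^b`
with `a > 0` satisfies `a * (c/d) > b`, i.e. `c*a > d*b`.
Here `false` plays the role of `0` and `true` of `1`; maximality is expressed
by requiring the prefix to end with `1` (or be empty) and the suffix to start
with `0` (or be empty). -/
def isValid (c d : ℕ) (w : List Bool) : Prop :=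
  ∀ p s : List Bool, ∀ a b : ℕ,
    w = p ++ List.replicate a false ++ List.replicate b true ++ s →
    (p = [] ∨ p.getLast? = some true) →
    (s = [] ∨ s.head? = some false) →
    0 < a → d * b < c * a

/-- number of words of length `n` in `W_{c/d,n}` -/
noncomputable def wcount (c d n : ℕ) : ℕ :=
  Nat.card {w : List Bool // w.length = n ∧ isValid c d w}

/-!
Lengthening a run of ones only strengthens its constraint, so the factors that stop inside a run
may be tested too: `w` is valid iff for every prefix `v 0 1^b` of `w` the word `v` ends with at
least `⌊bd/c⌋` zeros. Hence the valid words are the words `1^n` and, uniquely, the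
words `u 0^(1 + ⌊bd/c⌋) 1^b` with `u` valid. Writing `ℓ b = 1 + ⌊bd/c⌋ + b` for the length of the
last block, this gives `w_n = 1 + ∑_{ℓ b ≤ n} w_{n - ℓ b}`. Since `ℓ (c + b) = (c + d) + ℓ b`, the
terms with index at least `c`, together with the `1`, add up to `w_{n - (c + d)}`.
-/

open List

section Replicate

variable {α : Type*} {a : α}

lemma exists_eq_append_replicate (a : α) (l : List α) :
    ∃ p k, l = p ++ replicate k a ∧ p.getLast? ≠ some a := by
  induction l using List.reverseRecOn with
  | nil => exact ⟨[], 0, by simp⟩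
  | append_singleton l x ih =>
    by_cases hx : x = a
    · obtain ⟨p, k, rfl, hp⟩ := ih
      exact ⟨p, k + 1, by rw [hx, replicate_succ', append_assoc], hp⟩
    · exact ⟨l ++ [x], 0, by simp [hx]⟩

lemma exists_eq_replicate_append (a : α) (l : List α) :
    ∃ k s, l = replicate k a ++ s ∧ s.head? ≠ some a := by
  obtain ⟨p, k, hl, hp⟩ := exists_eq_append_replicate a l.reverse
  exact ⟨k, p.reverse, by rw [← reverse_reverse l, hl]; simp, by simpa using hp⟩

lemma replicate_suffix_append_replicate_iff {p : List α} (hp : p.getLast? ≠ some a) {m k : ℕ} :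
    replicate m a <:+ p ++ replicate k a ↔ m ≤ k := by
  induction k generalizing m with
  | zero =>
    cases m with
    | zero => simp
    | succ m =>
      refine iff_of_false ?_ (by simp)
      rintro ⟨t, ht⟩
      obtain rfl : t ++ replicate (m + 1) a = p := by simpa using ht
      simp [replicate_succ'] at hp
  | succ k ih =>
    cases m with
    | zero => simp
    | succ m =>
      rw [replicate_succ', replicate_succ', ← append_assoc, suffix_concat_iff]
      simp [ih]

lemma append_cons_inj_of_notMem_right {u v s t : List α} (hs : a ∉ s) (ht : a ∉ t) :
    u ++ a :: s = v ++ a :: t ↔ u = v ∧ s = t := by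
  refine ⟨fun h => ?_, by rintro ⟨rfl, rfl⟩; rfl⟩
  rcases append_eq_append_iff.1 h with ⟨r, rfl, h⟩ | ⟨r, rfl, h⟩ <;> cases r <;> simp_all

lemma append_false_cons_replicate_true_inj {u v : List Bool} {m k : ℕ} :
    u ++ false :: replicate m true = v ++ false :: replicate k true ↔ u = v ∧ m = k := by
  rw [append_cons_inj_of_notMem_right (by simp) (by simp), replicate_left_inj]

lemma eq_nil_or_getLast?_eq_some_true_iff {l : List Bool} :
    l = [] ∨ l.getLast? = some true ↔ l.getLast? ≠ some false := by
  rw [← getLast?_eq_none_iff]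
  generalize l.getLast? = o
  revert o
  decide

lemma eq_nil_or_head?_eq_some_false_iff {l : List Bool} :
    l = [] ∨ l.head? = some false ↔ l.head? ≠ some true := by
  rw [← head?_eq_none_iff]
  generalize l.head? = o
  revert o
  decide

end Replicate

section Validity

variable {c d : ℕ}

lemma isValid_iff_forall_prefix_suffix (hc : 0 < c) {w : List Bool} :
    isValid c d w ↔ ∀ v b, v ++ false :: replicate b true <+: w →
      replicate (b * d / c) false <:+ v := by
  constructor
  · rintro h v b ⟨t, rfl⟩
    obtain ⟨p, a, rfl, hp⟩ := exists_eq_append_replicate false v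
    obtain ⟨m, s, rfl, hs⟩ := exists_eq_replicate_append true t
    have hlt : d * (b + m) < c * (a + 1) := by
      refine h p s (a + 1) (b + m) ?_ (eq_nil_or_getLast?_eq_some_true_iff.2 hp)
        (eq_nil_or_head?_eq_some_false_iff.2 hs) a.succ_pos
      simp [replicate_succ', ← replicate_append_replicate]
    rw [replicate_suffix_append_replicate_iff hp, ← Nat.lt_succ_iff, Nat.div_lt_iff_lt_mul hc]
    linarith [Nat.zero_le (d * m)]
  · rintro h p s a b rfl hp - ha
    obtain ⟨a, rfl⟩ := Nat.exists_eq_add_one.2 ha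
    have hsuffix : replicate (b * d / c) false <:+ p ++ replicate a false :=
      h _ b ⟨s, by simp [replicate_succ']⟩
    rw [replicate_suffix_append_replicate_iff (eq_nil_or_getLast?_eq_some_true_iff.1 hp),
      ← Nat.lt_succ_iff, Nat.div_lt_iff_lt_mul hc] at hsuffix
    linarith

lemma isValid_concat_iff (hc : 0 < c) {w : List Bool} {x : Bool} :
    isValid c d (w ++ [x]) ↔ isValid c d w ∧
      ∀ v b, v ++ false :: replicate b true = w ++ [x] → replicate (b * d / c) false <:+ v := by
  simp only [isValid_iff_forall_prefix_suffix hc, prefix_concat_iff, or_imp, forall_and, and_comm]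

lemma isValid_append_false_cons_replicate_true_iff (hc : 0 < c) {v : List Bool} {b : ℕ} :
    isValid c d (v ++ false :: replicate b true) ↔
      isValid c d v ∧ replicate (b * d / c) false <:+ v := by
  have hlast (k : ℕ) : (∀ u m, u ++ false :: replicate m true = v ++ false :: replicate k true →
      replicate (m * d / c) false <:+ u) ↔ replicate (k * d / c) false <:+ v := by
    simp only [append_false_cons_replicate_true_inj]
    exact ⟨fun h => h v k ⟨rfl, rfl⟩, by rintro h _ _ ⟨rfl, rfl⟩; exact h⟩
  induction b with
  | zero => rw [replicate_zero, isValid_concat_iff hc, ← replicate_zero (a := true), hlast]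
  | succ b ih =>
    have hmono : replicate (b * d / c) false <:+ replicate ((b + 1) * d / c) false := by
      rw [suffix_replicate_iff]
      simp only [length_replicate, and_true]
      gcongr
      exact b.le_succ
    rw [replicate_succ', ← cons_append, ← append_assoc, isValid_concat_iff hc, append_assoc,
      cons_append, ← replicate_succ', hlast, and_congr_left_iff]
    exact fun h => ih.trans (and_iff_left (hmono.trans h))

lemma isValid_append_replicate_false_iff (hc : 0 < c) {w : List Bool} (k : ℕ) :
    isValid c d (w ++ replicate k false) ↔ isValid c d w := by
  induction k with
  | zero => simp
  | succ k ih =>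
    have hconcat (u : List Bool) : isValid c d (u ++ [false]) ↔ isValid c d u := by
      simpa using isValid_append_false_cons_replicate_true_iff (v := u) (b := 0) hc
    rw [replicate_succ', ← append_assoc, hconcat, ih]

lemma isValid_replicate_true (c d n : ℕ) : isValid c d (replicate n true) := by
  intro p s a b h _ _ ha
  have hmem : false ∈ replicate n true := by simp [h, ha.ne']
  simp at hmem

/-- The shortest word `0^a 1^b` with `a > 0` and `a * (c/d) > b`, which has `a = ⌊b * d / c⌋ + 1`;
its bidegree in (ones, zeros) is that of the `b`-th monomial of the model polynomial. The last `0`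
is kept apart because it marks where the trailing ones begin. -/
def minBlock (c d b : ℕ) : List Bool :=
  replicate (b * d / c) false ++ false :: replicate b true

lemma length_minBlock (c d b : ℕ) : (minBlock c d b).length = 1 + b * d / c + b := by
  simp only [minBlock, length_append, length_cons, length_replicate]
  ring

lemma lt_length_minBlock (c d b : ℕ) : b < (minBlock c d b).length := by
  rw [length_minBlock]
  exact Nat.lt_add_of_pos_left (by positivity)

lemma length_minBlock_add (hc : 0 < c) (b : ℕ) :
    (minBlock c d (c + b)).length = c + d + (minBlock c d b).length := by
  rw [length_minBlock, length_minBlock, add_mul, Nat.mul_add_div hc]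
  ring

lemma length_minBlock_le_of_lt (d : ℕ) {b : ℕ} (hb : b < c) : (minBlock c d b).length ≤ c + d := by
  have hdiv : b * d / c ≤ d := Nat.div_le_of_le_mul (Nat.mul_le_mul_right d hb.le)
  rw [length_minBlock]
  omega

lemma append_minBlock_inj {u v : List Bool} {i j : ℕ} :
    u ++ minBlock c d i = v ++ minBlock c d j ↔ u = v ∧ i = j := by
  refine ⟨fun h => ?_, by rintro ⟨rfl, rfl⟩; rfl⟩
  simp only [minBlock, ← append_assoc, append_false_cons_replicate_true_inj] at h
  obtain ⟨h, rfl⟩ := h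
  exact ⟨append_cancel_right h, rfl⟩

lemma append_minBlock_ne_replicate_true (u : List Bool) (b n : ℕ) :
    u ++ minBlock c d b ≠ replicate n true := by
  intro h
  have hmem : false ∈ replicate n true := by simp [← h, minBlock]
  simp at hmem

lemma isValid_append_minBlock_iff (hc : 0 < c) {u : List Bool} {b : ℕ} :
    isValid c d (u ++ minBlock c d b) ↔ isValid c d u := by
  rw [minBlock, ← append_assoc, isValid_append_false_cons_replicate_true_iff hc,
    isValid_append_replicate_false_iff hc]
  exact and_iff_left (suffix_append _ _)

lemma isValid_iff_eq_replicate_or_eq_append_minBlock (hc : 0 < c) {w : List Bool} :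
    isValid c d w ↔
      w = replicate w.length true ∨ ∃ u b, isValid c d u ∧ u ++ minBlock c d b = w := by
  constructor
  · intro h
    obtain ⟨p, b, rfl, hp⟩ := exists_eq_append_replicate true w
    obtain rfl | ⟨v, x, rfl⟩ := p.eq_nil_or_concat'
    · simp
    · obtain rfl : x = false := by simpa using hp
      rw [append_assoc, singleton_append] at h ⊢
      obtain ⟨hv, u, rfl⟩ := (isValid_append_false_cons_replicate_true_iff hc).1 h
      exact .inr ⟨u, b, (isValid_append_replicate_false_iff hc _).1 hv, by simp [minBlock]⟩
  · rintro (h | ⟨u, b, hu, rfl⟩)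
    · exact h ▸ isValid_replicate_true c d _
    · exact (isValid_append_minBlock_iff hc).2 hu

end Validity

section Counting

variable {c d n : ℕ}

/-- The set `W_{c/d,n}`, as a `Finset` so that its partition by last block can be counted. -/
noncomputable def validWords (c d n : ℕ) : Finset (List Bool) :=
  ((List.finite_length_eq Bool n).subset
    fun w (h : w.length = n ∧ isValid c d w) => h.1).toFinset

lemma mem_validWords {w : List Bool} : w ∈ validWords c d n ↔ w.length = n ∧ isValid c d w :=
  Set.Finite.mem_toFinset _

lemma card_validWords (c d n : ℕ) : (validWords c d n).card = wcount c d n :=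
  (Set.ncard_eq_toFinset_card _ _).symm

lemma validWords_eq_insert_biUnion (hc : 0 < c) {N : ℕ} (hN : n ≤ N) :
    validWords c d n = insert (replicate n true)
      ({b ∈ Finset.range N | (minBlock c d b).length ≤ n}.biUnion fun b =>
        (validWords c d (n - (minBlock c d b).length)).image (· ++ minBlock c d b)) := by
  ext w
  simp only [Finset.mem_insert, Finset.mem_biUnion, Finset.mem_filter, Finset.mem_range,
    Finset.mem_image, mem_validWords]
  constructor
  · rintro ⟨rfl, hw⟩
    refine ((isValid_iff_eq_replicate_or_eq_append_minBlock hc).1 hw).imp_right ?_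
    rintro ⟨u, b, hu, rfl⟩
    have hb := lt_length_minBlock c d b
    rw [length_append] at hN ⊢
    exact ⟨b, ⟨by omega, by omega⟩, u, ⟨by omega, hu⟩, rfl⟩
  · rintro (rfl | ⟨b, ⟨-, hb⟩, u, ⟨hlen, hu⟩, rfl⟩)
    · exact ⟨length_replicate, isValid_replicate_true c d n⟩
    · exact ⟨by rw [length_append]; omega, (isValid_append_minBlock_iff hc).2 hu⟩

lemma wcount_eq_sum_add_one (hc : 0 < c) {N : ℕ} (hN : n ≤ N) :
    wcount c d n = (∑ b ∈ Finset.range N with (minBlock c d b).length ≤ n,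
      wcount c d (n - (minBlock c d b).length)) + 1 := by
  rw [← card_validWords, validWords_eq_insert_biUnion hc hN, Finset.card_insert_of_notMem,
    Finset.card_biUnion]
  · congr! 2 with b
    rw [Finset.card_image_of_injective _ (append_left_injective _), card_validWords]
  · intro i _ j _ hij
    simp only [Finset.disjoint_left, Finset.mem_image]
    rintro _ ⟨u, -, rfl⟩ ⟨v, -, h⟩
    exact hij (append_minBlock_inj.1 h).2.symm
  · simp only [Finset.mem_biUnion, Finset.mem_image]
    rintro ⟨b, -, u, -, h⟩
    exact append_minBlock_ne_replicate_true u b n h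

end Counting

theorem stmt8_general (c d : ℕ) (hc : 0 < c) (n : ℕ) (hn : c + d ≤ n) :
    wcount c d n =
      (∑ i ∈ Finset.range c, wcount c d (n - (1 + i * d / c + i))) + wcount c d (n - (c + d)) := by
  rw [wcount_eq_sum_add_one hc (Nat.le_add_left n c),
    wcount_eq_sum_add_one hc (Nat.sub_le n (c + d)), Finset.sum_filter, Finset.sum_filter,
    Finset.sum_range_add, add_assoc]
  congr 1
  · refine Finset.sum_congr rfl fun i hi => ?_
    rw [if_pos ((length_minBlock_le_of_lt d (Finset.mem_range.1 hi)).trans hn), length_minBlock]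
  · simp only [length_minBlock_add hc, Nat.sub_sub, Nat.le_sub_iff_add_le' hn]

theorem stmt8 (c d : ℕ) (hc : 0 < c) (hd : 0 < d) (hcd : Nat.Coprime c d) (n : ℕ)
    (hn : c + d ≤ n) :
    wcount c d n =
      (∑ i ∈ Finset.range c, wcount c d (n - (1 + i * d / c + i))) + wcount c d (n - (c + d)) :=
  stmt8_general c d hc n hn
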